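/- arXiv:1203.2283 — 7 statements merged into one kernel-verified Lean document; each statement's English description precedes it below -/
import Mathlib

section
/- Let f : [a,b] → ℝ be a differentiable function on [a,b] with f' integrable on [a,b], and let α ≥ 1. Then the following generalized Montgomery identity for fractional integrals holds for every x ∈ [a,b): f(x) = (α+1)Γ(α)·((b−x)^{1−α}/(b−a))·J_a^α f(b) − J_a^{α−1}(P₂(x,·)f)(b) − ((b−x)^{2−α}/(b−a))·Γ(α)·J_a^{α−1} f(b) − ((b−x)^{1−α}(x−a)/(b−a)^{2−α})·f(a) + 2·J_a^α(K₁(x,·)f')(b). -/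
open MeasureTheory intervalIntegral Set

/-- Riemann–Liouville fractional integral of order `α` with base point `a`. -/
noncomputable def RL (a α : ℝ) (f : ℝ → ℝ) (x : ℝ) : ℝ :=
  if α = 0 then f x
  else (1 / Real.Gamma α) * ∫ t in a..x, (x - t) ^ (α - 1) * f t

/-- Fractional Peano kernel `P₂`. -/
noncomputable def P2 (a b α x t : ℝ) : ℝ :=
  if t < x then (t - a) / (b - a) * (b - x) ^ (1 - α) * Real.Gamma α
  else (t - b) / (b - a) * (b - x) ^ (1 - α) * Real.Gamma α

/-- The kernel `K₁`. -/
noncomputable def K1 (a b α x t : ℝ) : ℝ :=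
  if t < x then (t - (a + x) / 2) * ((b - x) ^ (1 - α) / (b - a)) * Real.Gamma α
  else (t - (b + x) / 2) * ((b - x) ^ (1 - α) / (b - a)) * Real.Gamma α

/-! The kernel `K₁(x, ·)` is piecewise affine with slope `C = (b - x)^(1-α) Γ(α) / (b - a)` and
jumps by `-C (b - a) / 2` at `x`. Fractional integration by parts of `(K₁ f)' = K₁ f' + C f`
therefore turns `J^α (K₁ f')` into `J^(α-1) (K₁ f) - C J^α f` plus boundary terms, among which the
jump contributes `f x / 2`. The identity `2 K₁(x, t) = P₂(x, t) + C ((b - x) - (b - t))`, together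
with `J^(α-1) ((b - ·) f) (b) = (α - 1) J^α f (b)`, then rewrites `2 J^(α-1) (K₁ f)`. -/

section Integrals

variable {a b c d r x : ℝ} {g g' k : ℝ → ℝ}

lemma integral_ite_lt (hax : a ≤ x) (hxb : x ≤ b)
    (hg : IntervalIntegrable g volume a x) (hk : IntervalIntegrable k volume x b) :
    ∫ t in a..b, (if t < x then g t else k t) = (∫ t in a..x, g t) + ∫ t in x..b, k t := by
  have eq_left : EqOn g (fun t => if t < x then g t else k t) (uIoo a x) := fun t ht => by
    rw [uIoo_of_le hax] at ht
    exact (if_pos ht.2).symm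
  have eq_right : EqOn k (fun t => if t < x then g t else k t) (uIoo x b) := fun t ht => by
    rw [uIoo_of_le hxb] at ht
    exact (if_neg ht.1.not_gt).symm
  rw [integral_congr_uIoo eq_left, integral_congr_uIoo eq_right,
    integral_add_adjacent_intervals (hg.congr_uIoo eq_left) (hk.congr_uIoo eq_right)]

lemma intervalIntegrable_sub_rpow (hr : -1 < r) :
    IntervalIntegrable (fun t => (b - t) ^ r) volume c d := by
  simpa using (intervalIntegrable_rpow' (a := b - c) (b := b - d) hr).comp_sub_left b

lemma intervalIntegrable_mul_sub_rpow_sub_one (hr : 0 ≤ r) :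
    IntervalIntegrable (fun t => r * (b - t) ^ (r - 1)) volume c d := by
  rcases hr.eq_or_lt with rfl | hr
  · simp
  · exact (intervalIntegrable_sub_rpow (by linarith)).const_mul r

lemma continuous_sub_rpow (hr : 0 ≤ r) : Continuous fun t : ℝ => (b - t) ^ r :=
  (continuous_const.sub continuous_id).rpow_const fun _ => Or.inr hr

lemma integral_sub_rpow_mul_deriv (hr : 0 ≤ r) (hcd : c ≤ d) (hdb : d ≤ b)
    (hg : ContinuousOn g (Icc c d)) (hg' : ∀ t ∈ Ioo c d, HasDerivAt g (g' t) t)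
    (hg'_int : IntervalIntegrable g' volume c d) :
    ∫ t in c..d, (b - t) ^ r * g' t =
      (b - d) ^ r * g d - (b - c) ^ r * g c + ∫ t in c..d, r * (b - t) ^ (r - 1) * g t := by
  have hweight : ∀ t ∈ Ioo c d, HasDerivAt (fun t => (b - t) ^ r) (-(r * (b - t) ^ (r - 1))) t := by
    intro t ht
    have hne : b - t ≠ 0 := by linarith [ht.2]
    simpa using ((hasDerivAt_id t).const_sub b).rpow_const (p := r) (Or.inl hne)
  have hparts := integral_mul_deriv_eq_deriv_mul_of_hasDerivAt
    (u' := fun t => -(r * (b - t) ^ (r - 1)))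
    (continuous_sub_rpow hr).continuousOn (by rwa [uIcc_of_le hcd])
    (by simpa only [min_eq_left hcd, max_eq_right hcd] using hweight)
    (by simpa only [min_eq_left hcd, max_eq_right hcd] using hg')
    (intervalIntegrable_mul_sub_rpow_sub_one hr).neg hg'_int
  simpa only [neg_mul, intervalIntegral.integral_neg, sub_neg_eq_add] using hparts

end Integrals

/-- Convergence of the integral defining `RL a α f b`. For `α = 0` it holds for every `f`, as
`RL a 0` is the identity and involves no integral. -/
def RLIntegrable (a α : ℝ) (f : ℝ → ℝ) (b : ℝ) : Prop :=
  α ≠ 0 → IntervalIntegrable (fun t => (b - t) ^ (α - 1) * f t) volume a b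

namespace RLIntegrable

variable {a b x α : ℝ} {f g φ : ℝ → ℝ}

lemma of_continuousOn (hα : 0 ≤ α) (hf : ContinuousOn f (uIcc a b)) : RLIntegrable a α f b :=
  fun hα0 => (intervalIntegrable_sub_rpow (by linarith [hα.lt_of_ne' hα0])).mul_continuousOn hf

lemma of_intervalIntegrable (hα : 1 ≤ α) (hf : IntervalIntegrable f volume a b) :
    RLIntegrable a α f b :=
  fun _ => hf.continuousOn_mul (continuous_sub_rpow (by linarith)).continuousOn

lemma add (hf : RLIntegrable a α f b) (hg : RLIntegrable a α g b) :
    RLIntegrable a α (fun t => f t + g t) b := fun hα0 => by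
  simpa only [mul_add] using (hf hα0).add (hg hα0)

lemma continuous_mul (hφ : Continuous φ) (hf : RLIntegrable a α f b) :
    RLIntegrable a α (fun t => φ t * f t) b := fun hα0 => by
  simpa only [mul_left_comm] using (hf hα0).continuousOn_mul hφ.continuousOn

lemma ite_lt (hf : RLIntegrable a α f b) (hg : RLIntegrable a α g b) :
    RLIntegrable a α (fun t => if t < x then f t else g t) b := fun hα0 => by
  simp only [mul_ite]
  exact ⟨.piecewise (s := Iio x) measurableSet_Iio (hf hα0).1.integrableOn
      (hg hα0).1.integrableOn,
    .piecewise (s := Iio x) measurableSet_Iio (hf hα0).2.integrableOn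
      (hg hα0).2.integrableOn⟩

end RLIntegrable

section RiemannLiouville

variable {a b x α : ℝ} {f g g' k k' : ℝ → ℝ}

lemma RL_add (hf : RLIntegrable a α f b) (hg : RLIntegrable a α g b) :
    RL a α (fun t => f t + g t) b = RL a α f b + RL a α g b := by
  by_cases hα0 : α = 0
  · simp only [RL, if_pos hα0]
  · simp only [RL, if_neg hα0, mul_add]
    rw [intervalIntegral.integral_add (hf hα0) (hg hα0), mul_add]

lemma RL_const_mul (c : ℝ) : RL a α (fun t => c * f t) b = c * RL a α f b := by
  unfold RL
  split_ifs
  · rfl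
  · simp only [mul_left_comm _ c, intervalIntegral.integral_const_mul]

lemma Gamma_mul_RL (hα : 0 < α) :
    Real.Gamma α * RL a α f b = ∫ t in a..b, (b - t) ^ (α - 1) * f t := by
  rw [RL, if_neg hα.ne', ← mul_assoc, mul_one_div_cancel (Real.Gamma_pos_of_pos hα).ne', one_mul]

-- The term `0 ^ (α - 1) * f b` vanishes unless `α = 1`, where it is the whole right-hand side.
lemma Gamma_mul_RL_sub_one (hα : 1 ≤ α) :
    Real.Gamma α * RL a (α - 1) f b =
      0 ^ (α - 1) * f b + ∫ t in a..b, (α - 1) * (b - t) ^ (α - 1 - 1) * f t := by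
  rcases hα.eq_or_lt with rfl | hα
  · simp [RL]
  · have hα' : 0 < α - 1 := sub_pos.2 hα
    have hΓ : Real.Gamma α = (α - 1) * Real.Gamma (α - 1) := by
      simpa using Real.Gamma_add_one hα'.ne'
    simp only [hΓ, mul_assoc, intervalIntegral.integral_const_mul, Gamma_mul_RL hα',
      Real.zero_rpow hα'.ne', zero_mul, zero_add]

lemma RL_sub_mul (hα : 0 ≤ α) (hab : a ≤ b) :
    RL a α (fun t => (b - t) * f t) b = α * RL a (α + 1) f b := by
  rcases hα.eq_or_lt with rfl | hα
  · simp [RL]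
  · have hpow : EqOn (fun t => (b - t) ^ (α - 1) * ((b - t) * f t))
        (fun t => (b - t) ^ (α + 1 - 1) * f t) (uIcc a b) := fun t ht => by
      rw [uIcc_of_le hab] at ht
      have := Real.rpow_add_one' (sub_nonneg.2 ht.2) (y := α - 1) (by simpa using hα.ne')
      rw [sub_add_cancel] at this
      simp only [add_sub_cancel_right, this, mul_assoc]
    have hΓ : Real.Gamma α ≠ 0 := (Real.Gamma_pos_of_pos hα).ne'
    apply mul_left_cancel₀ hΓ
    rw [Gamma_mul_RL hα, integral_congr hpow, ← Gamma_mul_RL (by linarith),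
      Real.Gamma_add_one hα.ne']
    ring

lemma RL_ite_lt_deriv (hα : 1 ≤ α) (hax : a ≤ x) (hxb : x ≤ b)
    (hg : ContinuousOn g (Icc a x)) (hg' : ∀ t ∈ Ioo a x, HasDerivAt g (g' t) t)
    (hg'_int : IntervalIntegrable g' volume a x)
    (hk : ContinuousOn k (Icc x b)) (hk' : ∀ t ∈ Ioo x b, HasDerivAt k (k' t) t)
    (hk'_int : IntervalIntegrable k' volume x b) :
    RL a α (fun t => if t < x then g' t else k' t) b =
      RL a (α - 1) (fun t => if t < x then g t else k t) b
        - ((b - a) ^ (α - 1) * g a + (b - x) ^ (α - 1) * (k x - g x)) / Real.Gamma α := by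
  have hα' : 0 ≤ α - 1 := sub_nonneg.2 hα
  have hΓ : Real.Gamma α ≠ 0 := (Real.Gamma_pos_of_pos (by linarith)).ne'
  have hderiv : Real.Gamma α * RL a α (fun t => if t < x then g' t else k' t) b =
      (∫ t in a..x, (b - t) ^ (α - 1) * g' t) + ∫ t in x..b, (b - t) ^ (α - 1) * k' t := by
    simp only [Gamma_mul_RL (show 0 < α by linarith), mul_ite]
    exact integral_ite_lt hax hxb (hg'_int.continuousOn_mul (continuous_sub_rpow hα').continuousOn)
      (hk'_int.continuousOn_mul (continuous_sub_rpow hα').continuousOn)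
  have hprim : Real.Gamma α * RL a (α - 1) (fun t => if t < x then g t else k t) b =
      0 ^ (α - 1) * k b + ((∫ t in a..x, (α - 1) * (b - t) ^ (α - 1 - 1) * g t)
        + ∫ t in x..b, (α - 1) * (b - t) ^ (α - 1 - 1) * k t) := by
    simp only [Gamma_mul_RL_sub_one hα, if_neg hxb.not_gt, mul_ite]
    rw [integral_ite_lt hax hxb
      ((intervalIntegrable_mul_sub_rpow_sub_one hα').mul_continuousOn (by rwa [uIcc_of_le hax]))
      ((intervalIntegrable_mul_sub_rpow_sub_one hα').mul_continuousOn (by rwa [uIcc_of_le hxb]))]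
  apply mul_left_cancel₀ hΓ
  rw [hderiv, integral_sub_rpow_mul_deriv hα' hax hxb hg hg' hg'_int,
    integral_sub_rpow_mul_deriv hα' hxb le_rfl hk hk' hk'_int, mul_sub, hprim, sub_self,
    mul_div_cancel₀ _ hΓ]
  ring

end RiemannLiouville

section Kernels

/-- The common slope in `t` of the piecewise affine kernels `P2 a b α x t` and `K1 a b α x t`. -/
noncomputable def kernelSlope (a b α x : ℝ) : ℝ :=
  (b - x) ^ (1 - α) / (b - a) * Real.Gamma α

variable {a b x α β : ℝ} {f f' h : ℝ → ℝ}

lemma kernelSlope_mul_sub (hxb : x < b) :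
    kernelSlope a b α x * (b - x) = (b - x) ^ (2 - α) / (b - a) * Real.Gamma α := by
  have hpow : (b - x) ^ (2 - α) = (b - x) ^ (1 - α) * (b - x) := by
    rw [← Real.rpow_add_one (sub_pos.2 hxb).ne']
    ring_nf
  rw [hpow, kernelSlope]
  ring

lemma kernelSlope_div_Gamma (hα : 0 < α) :
    kernelSlope a b α x / Real.Gamma α = (b - x) ^ (1 - α) / (b - a) :=
  mul_div_cancel_right₀ _ (Real.Gamma_pos_of_pos hα).ne'

lemma kernelSlope_div_Gamma_mul_rpow (hα : 0 < α) (hab : a < b) :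
    kernelSlope a b α x / Real.Gamma α * (b - a) ^ (α - 1) =
      (b - x) ^ (1 - α) / (b - a) ^ (2 - α) := by
  have hpow : (b - a) ^ (α - 1) / (b - a) = ((b - a) ^ (2 - α))⁻¹ := by
    rw [← Real.rpow_sub_one (sub_pos.2 hab).ne', ← Real.rpow_neg (sub_pos.2 hab).le]
    ring_nf
  rw [kernelSlope_div_Gamma hα, div_eq_mul_inv _ ((b - a) ^ (2 - α)), ← hpow]
  ring

lemma kernelSlope_div_Gamma_mul_rpow_mul_sub (hα : 0 < α) (hab : a < b) (hxb : x < b) :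
    kernelSlope a b α x / Real.Gamma α * ((b - x) ^ (α - 1) * (b - a)) = 1 := by
  have hpow : (b - x) ^ (1 - α) * (b - x) ^ (α - 1) = 1 := by
    rw [← Real.rpow_add (sub_pos.2 hxb), sub_add_sub_cancel', sub_self, Real.rpow_zero]
  rw [kernelSlope_div_Gamma hα, mul_comm _ (b - a), ← mul_assoc,
    div_mul_cancel₀ _ (sub_pos.2 hab).ne', hpow]

lemma P2_eq_ite (a b α x t : ℝ) :
    P2 a b α x t =
      if t < x then kernelSlope a b α x * (t - a) else kernelSlope a b α x * (t - b) := by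
  unfold P2 kernelSlope
  split_ifs <;> ring

lemma K1_eq_ite (a b α x t : ℝ) :
    K1 a b α x t = if t < x then kernelSlope a b α x * (t - (a + x) / 2)
      else kernelSlope a b α x * (t - (b + x) / 2) := by
  unfold K1 kernelSlope
  split_ifs <;> ring

lemma two_mul_K1 (a b α x t : ℝ) :
    2 * K1 a b α x t = P2 a b α x t + kernelSlope a b α x * ((b - x) - (b - t)) := by
  rw [K1_eq_ite, P2_eq_ite]
  split_ifs <;> ring

lemma RLIntegrable.P2_mul (hh : RLIntegrable a β h b) :
    RLIntegrable a β (fun t => P2 a b α x t * h t) b := by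
  simp only [P2_eq_ite, ite_mul]
  exact (hh.continuous_mul (by fun_prop)).ite_lt (hh.continuous_mul (by fun_prop))

lemma RLIntegrable.K1_mul (hh : RLIntegrable a β h b) :
    RLIntegrable a β (fun t => K1 a b α x t * h t) b := by
  simp only [K1_eq_ite, ite_mul]
  exact (hh.continuous_mul (by fun_prop)).ite_lt (hh.continuous_mul (by fun_prop))

lemma two_mul_RL_K1_mul (hβ : 0 ≤ β) (hab : a ≤ b) (hf : ContinuousOn f (Icc a b)) :
    2 * RL a β (fun t => K1 a b α x t * f t) b =
      RL a β (fun t => P2 a b α x t * f t) b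
        + kernelSlope a b α x * ((b - x) * RL a β f b - β * RL a (β + 1) f b) := by
  set C := kernelSlope a b α x
  have hf_int : RLIntegrable a β f b := .of_continuousOn hβ (by rwa [uIcc_of_le hab])
  have hconst : RLIntegrable a β (fun t => C * (b - x) * f t) b :=
    hf_int.continuous_mul continuous_const
  have hmoment : RLIntegrable a β (fun t => -C * ((b - t) * f t)) b :=
    (hf_int.continuous_mul (by fun_prop)).continuous_mul continuous_const
  have hkernel : (fun t => 2 * (K1 a b α x t * f t)) = fun t =>
      P2 a b α x t * f t + (C * (b - x) * f t + -C * ((b - t) * f t)) := by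
    funext t
    rw [← mul_assoc, two_mul_K1]
    ring
  rw [← RL_const_mul, hkernel, RL_add hf_int.P2_mul (hconst.add hmoment), RL_add hconst hmoment,
    RL_const_mul, RL_const_mul, RL_sub_mul hβ hab]
  ring

lemma two_mul_RL_K1_mul_deriv (hα : 1 ≤ α) (hax : a ≤ x) (hxb : x ≤ b)
    (hf : ContinuousOn f (Icc a b)) (hf' : ∀ t ∈ Ioo a b, HasDerivAt f (f' t) t)
    (hf'_int : IntervalIntegrable f' volume a b) :
    2 * RL a α (fun t => K1 a b α x t * f' t) b =
      2 * RL a (α - 1) (fun t => K1 a b α x t * f t) b - 2 * kernelSlope a b α x * RL a α f b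
        + kernelSlope a b α x / Real.Gamma α *
          ((b - a) ^ (α - 1) * (x - a) * f a + (b - x) ^ (α - 1) * (b - a) * f x) := by
  set C := kernelSlope a b α x
  have hab : a ≤ b := hax.trans hxb
  have hf_uIcc : ContinuousOn f (uIcc a b) := by rwa [uIcc_of_le hab]
  have hx : x ∈ uIcc a b := by rw [uIcc_of_le hab]; exact ⟨hax, hxb⟩
  have hderiv (m : ℝ) {t : ℝ} (ht : t ∈ Ioo a b) : HasDerivAt (fun t => C * (t - m) * f t)
      (C * (t - m) * f' t + C * f t) t :=
    ((((hasDerivAt_id' t).sub_const m).const_mul C).mul (hf' t ht)).congr_deriv (by ring)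
  have hcont (m : ℝ) : ContinuousOn (fun t => C * (t - m) * f t) (Icc a b) := by fun_prop
  have hderiv_int (m : ℝ) :
      IntervalIntegrable (fun t => C * (t - m) * f' t + C * f t) volume a b :=
    (hf'_int.continuousOn_mul (by fun_prop)).add (hf_uIcc.intervalIntegrable.const_mul C)
  have hparts := RL_ite_lt_deriv hα hax hxb
    ((hcont ((a + x) / 2)).mono (Icc_subset_Icc_right hxb))
    (fun t ht => hderiv _ (Ioo_subset_Ioo_right hxb ht))
    ((hderiv_int _).mono_set (uIcc_subset_uIcc_left hx))
    ((hcont ((b + x) / 2)).mono (Icc_subset_Icc_left hax))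
    (fun t ht => hderiv _ (Ioo_subset_Ioo_left hax ht))
    ((hderiv_int _).mono_set (uIcc_subset_uIcc_right hx))
  simp only [← ite_add, ← ite_mul, C, ← K1_eq_ite] at hparts
  have hsum : RL a α (fun t => K1 a b α x t * f' t + C * f t) b =
      RL a α (fun t => K1 a b α x t * f' t) b + C * RL a α f b := by
    rw [RL_add (RLIntegrable.of_intervalIntegrable hα hf'_int).K1_mul, RL_const_mul]
    exact (RLIntegrable.of_continuousOn (by linarith) hf_uIcc).continuous_mul continuous_const
  linear_combination 2 * hparts - 2 * hsum

end Kernels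

theorem generalized_montgomery_identity_general {a b α x : ℝ} {f f' : ℝ → ℝ}
    (hα : 1 ≤ α) (hx : x ∈ Ico a b) (hf : ContinuousOn f (Icc a b))
    (hf' : ∀ t ∈ Ioo a b, HasDerivAt f (f' t) t) (hf'_int : IntervalIntegrable f' volume a b) :
    f x =
      (α + 1) * Real.Gamma α * ((b - x) ^ (1 - α) / (b - a)) * RL a α f b
      - RL a (α - 1) (fun t => P2 a b α x t * f t) b
      - ((b - x) ^ (2 - α) / (b - a)) * Real.Gamma α * RL a (α - 1) f b
      - ((b - x) ^ (1 - α) * (x - a) / (b - a) ^ (2 - α)) * f a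
      + 2 * RL a α (fun t => K1 a b α x t * f' t) b := by
  have hab : a < b := hx.1.trans_lt hx.2
  have hα0 : 0 < α := by linarith
  have hderiv := two_mul_RL_K1_mul_deriv hα hx.1 hx.2.le hf hf' hf'_int
  have hprim := two_mul_RL_K1_mul (α := α) (x := x) (sub_nonneg.2 hα) hab.le hf
  rw [sub_add_cancel] at hprim
  have hslope : kernelSlope a b α x = (b - x) ^ (1 - α) / (b - a) * Real.Gamma α := rfl
  linear_combination (α + 1) * RL a α f b * hslope - hderiv - hprim
    - RL a (α - 1) f b * kernelSlope_mul_sub hx.2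
    - (x - a) * f a * kernelSlope_div_Gamma_mul_rpow hα0 hab
    - f x * kernelSlope_div_Gamma_mul_rpow_mul_sub hα0 hab hx.2

theorem generalized_montgomery_identity
    (a b α : ℝ) (hab : a < b) (hα : 1 ≤ α)
    (f f' : ℝ → ℝ)
    (hf : ∀ t ∈ Set.Icc a b, HasDerivAt f (f' t) t)
    (hf' : IntervalIntegrable f' volume a b)
    (x : ℝ) (hx : x ∈ Set.Ico a b) :
    f x =
      (α + 1) * Real.Gamma α * ((b - x) ^ (1 - α) / (b - a)) * RL a α f b
      - RL a (α - 1) (fun t => P2 a b α x t * f t) b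
      - ((b - x) ^ (2 - α) / (b - a)) * Real.Gamma α * RL a (α - 1) f b
      - ((b - x) ^ (1 - α) * (x - a) / (b - a) ^ (2 - α)) * f a
      + 2 * RL a α (fun t => K1 a b α x t * f' t) b := by
  exact generalized_montgomery_identity_general hα hx
    (fun t ht => (hf t ht).continuousAt.continuousWithinAt)
    (fun t ht => hf t (Ioo_subset_Icc_self ht)) hf'
end

section
/- Let f be a differentiable function on [a,b] with |f'(x)| ≤ M for all x ∈ [a,b]. Then for every x ∈ [a,b]: |(1/2)f(x) − ((x−b)f(b) − (x−a)f(a))/(2(b−a)) − (1/(b−a)) ∫_a^b f(t) dt| ≤ (M/(b−a))·[((x−a)² + (b−x)²)/2]. -/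
open MeasureTheory intervalIntegral Set

open scoped NNReal

/-!
A function with Lipschitz constant `K` stays within `K * |t - c|` of its value at `c`, so on the
interval from `c` to `d` the one-point rule based at `c` has error at most `K * (d - c) ^ 2 / 2`.
Applying this from both ends up to the midpoint bounds the error of the trapezoidal rule by
`K * (d - c) ^ 2 / 4`. The expression to be estimated is the sum of the trapezoidal errors on
`[a, x]` and `[x, b]`, divided by `b - a`.
-/

section LipschitzQuadrature

variable {E : Type*} [NormedAddCommGroup E] [NormedSpace ℝ E] [CompleteSpace E]
  {f : ℝ → E} {K : ℝ≥0}

lemma norm_smul_left_sub_integral_le_of_lipschitzOnWith {c d : ℝ}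
    (hf : LipschitzOnWith K f (uIcc c d)) :
    ‖(d - c) • f c - ∫ t in c..d, f t‖ ≤ K * (d - c) ^ 2 / 2 := by
  have integral_sub_eq : ∫ t in c..d, (f c - f t) = (d - c) • f c - ∫ t in c..d, f t := by
    rw [integral_sub intervalIntegrable_const hf.continuousOn.intervalIntegrable,
      intervalIntegral.integral_const]
  have pointwise_bound : ∀ t ∈ uIoc c d, ‖f c - f t‖ ≤ K * |t - c| := fun t ht ↦ by
    simpa [norm_sub_rev, abs_sub_comm] using
      hf.norm_sub_le left_mem_uIcc (uIoc_subset_uIcc ht)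
  have integrable_bound : IntegrableOn (fun t ↦ K * |t - c|) (uIoc c d) :=
    (by fun_prop : Continuous fun t ↦ K * |t - c|).integrableOn_uIoc
  calc ‖(d - c) • f c - ∫ t in c..d, f t‖
      = ‖∫ t in uIoc c d, (f c - f t)‖ := by
        rw [← integral_sub_eq, norm_intervalIntegral_eq]
    _ ≤ ∫ t in uIoc c d, K * |t - c| :=
        norm_integral_le_of_norm_le integrable_bound
          ((ae_restrict_iff' measurableSet_uIoc).2 (.of_forall pointwise_bound))
    _ = K * (d - c) ^ 2 / 2 := by
        have integral_abs_sub : ∫ t in uIoc c d, |t - c| = (d - c) ^ 2 / 2 := by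
          simpa [one_add_one_eq_two] using integral_pow_abs_sub_uIoc (a := c) (b := d) 1
        rw [MeasureTheory.integral_const_mul, integral_abs_sub, mul_div_assoc]

lemma norm_trapezoid_sub_integral_le_of_lipschitzOnWith {c d : ℝ}
    (hf : LipschitzOnWith K f (uIcc c d)) :
    ‖((d - c) / 2) • (f c + f d) - ∫ t in c..d, f t‖ ≤ K * (d - c) ^ 2 / 4 := by
  have midpoint_mem : (c + d) / 2 ∈ uIcc c d := by
    rw [mem_uIcc]
    grind
  have lipschitz_left := hf.mono (uIcc_subset_uIcc_left midpoint_mem)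
  have lipschitz_right := hf.mono (uIcc_subset_uIcc_right midpoint_mem)
  rw [uIcc_comm] at lipschitz_right
  have integral_split := integral_add_adjacent_intervals (μ := volume)
    lipschitz_left.continuousOn.intervalIntegrable
    lipschitz_right.continuousOn.intervalIntegrable.symm
  have error_split : ((d - c) / 2) • (f c + f d) - ∫ t in c..d, f t
      = (((c + d) / 2 - c) • f c - ∫ t in c..(c + d) / 2, f t)
        - (((c + d) / 2 - d) • f d - ∫ t in d..(c + d) / 2, f t) := by
    rw [← integral_split, integral_symm d]
    module
  calc ‖((d - c) / 2) • (f c + f d) - ∫ t in c..d, f t‖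
      ≤ K * ((c + d) / 2 - c) ^ 2 / 2 + K * ((c + d) / 2 - d) ^ 2 / 2 := by
        rw [error_split]
        exact norm_sub_le_of_le
          (norm_smul_left_sub_integral_le_of_lipschitzOnWith lipschitz_left)
          (norm_smul_left_sub_integral_le_of_lipschitzOnWith lipschitz_right)
    _ = K * (d - c) ^ 2 / 4 := by ring

theorem ostrowski_gruss_alpha_one_general {a b : ℝ} (hab : a < b)
    (hf : LipschitzOnWith K f (Icc a b)) {x : ℝ} (hx : x ∈ Icc a b) :
    ‖(1 / 2 : ℝ) • f x - (1 / (2 * (b - a))) • ((x - b) • f b - (x - a) • f a)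
        - (1 / (b - a)) • ∫ t in a..b, f t‖
      ≤ K / (b - a) * (((x - a) ^ 2 + (b - x) ^ 2) / 4) := by
  rw [← uIcc_of_le hab.le] at hf hx
  have lipschitz_left := hf.mono (uIcc_subset_uIcc_left hx)
  have lipschitz_right := hf.mono (uIcc_subset_uIcc_right hx)
  have integral_split := integral_add_adjacent_intervals (μ := volume)
    lipschitz_left.continuousOn.intervalIntegrable
    lipschitz_right.continuousOn.intervalIntegrable
  have length_ne_zero : b - a ≠ 0 := sub_ne_zero.2 hab.ne'
  have error_split :
      (1 / 2 : ℝ) • f x - (1 / (2 * (b - a))) • ((x - b) • f b - (x - a) • f a)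
          - (1 / (b - a)) • ∫ t in a..b, f t
        = (1 / (b - a)) • ((((x - a) / 2) • (f a + f x) - ∫ t in a..x, f t)
          + (((b - x) / 2) • (f x + f b) - ∫ t in x..b, f t)) := by
    rw [← integral_split]
    match_scalars <;> field_simp
    all_goals ring
  calc _ = 1 / (b - a) * ‖(((x - a) / 2) • (f a + f x) - ∫ t in a..x, f t)
          + (((b - x) / 2) • (f x + f b) - ∫ t in x..b, f t)‖ := by
        rw [error_split, norm_smul_of_nonneg (by positivity)]
    _ ≤ 1 / (b - a) * (K * (x - a) ^ 2 / 4 + K * (b - x) ^ 2 / 4) := by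
        gcongr
        exact norm_add_le_of_le
          (norm_trapezoid_sub_integral_le_of_lipschitzOnWith lipschitz_left)
          (norm_trapezoid_sub_integral_le_of_lipschitzOnWith lipschitz_right)
    _ = K / (b - a) * (((x - a) ^ 2 + (b - x) ^ 2) / 4) := by ring

end LipschitzQuadrature

theorem ostrowski_gruss_alpha_one
    (a b M : ℝ) (hab : a < b) (hM : 0 < M)
    (f f' : ℝ → ℝ)
    (hf : ∀ t ∈ Set.Icc a b, HasDerivAt f (f' t) t)
    (hbound : ∀ t ∈ Set.Icc a b, |f' t| ≤ M)
    (x : ℝ) (hx : x ∈ Set.Icc a b) :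
    |(1 / 2) * f x - ((x - b) * f b - (x - a) * f a) / (2 * (b - a))
        - (1 / (b - a)) * ∫ t in a..b, f t|
      ≤ M / (b - a) * (((x - a) ^ 2 + (b - x) ^ 2) / 2) := by
  lift M to ℝ≥0 using hM.le
  have lipschitz : LipschitzOnWith M f (Icc a b) :=
    (convex_Icc a b).lipschitzOnWith_of_nnnorm_hasDerivWithin_le
      (fun t ht ↦ (hf t ht).hasDerivWithinAt) hbound
  have sharp_bound := ostrowski_gruss_alpha_one_general hab lipschitz hx
  simp only [smul_eq_mul, Real.norm_eq_abs, one_div_mul_eq_div (2 * (b - a))] at sharp_bound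
  exact sharp_bound.trans (by gcongr; norm_num)
end

section
/- Let f be a differentiable function on [a,b] with |f'(x)| ≤ M for all x ∈ [a,b]. Then |(1/2)f((a+b)/2) + (f(a)+f(b))/4 − (1/(b−a)) ∫_a^b f(t) dt| ≤ M(b−a)/4. -/
open MeasureTheory intervalIntegral Set

/-!
For a `K`-Lipschitz function the error of one trapezoid is at most `K (b - a)² / 4`: on each half of
the interval compare `f` with its value at the nearer endpoint. Cutting into `N` pieces gains a
factor `N`. The mean `f ((a + b) / 2) / 2 + (f a + f b) / 4` is the trapezoidal rule with two
trapezoids, divided by `b - a`, so it approximates the average of `f` to within `K (b - a) / 8`.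
-/

open scoped NNReal Interval

section LipschitzTrapezoid

variable {K : ℝ≥0} {a b : ℝ}

theorem norm_integral_sub_left_le_of_lipschitzOnWith {E : Type*} [NormedAddCommGroup E]
    [NormedSpace ℝ E] {f : ℝ → E} (hf : LipschitzOnWith K f [[a, b]]) :
    ‖∫ t in a..b, (f t - f a)‖ ≤ K * (b - a) ^ 2 / 2 := by
  have hbound : ∀ t ∈ Ι a b, ‖f t - f a‖ ≤ K * |t - a| := fun t ht =>
    hf.norm_sub_le (uIoc_subset_uIcc ht) left_mem_uIcc
  have hint : IntegrableOn (fun t => K * |t - a|) (Ι a b) :=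
    (Continuous.intervalIntegrable (by fun_prop) a b).def'
  have habs : ∫ t in Ι a b, |t - a| = (b - a) ^ 2 / 2 := by
    simpa [one_add_one_eq_two] using integral_pow_abs_sub_uIoc (a := a) (b := b) 1
  calc ‖∫ t in a..b, (f t - f a)‖
      = ‖∫ t in Ι a b, (f t - f a)‖ := norm_integral_eq_norm_integral_uIoc _
    _ ≤ ∫ t in Ι a b, K * |t - a| := MeasureTheory.norm_integral_le_of_norm_le hint <|
        (ae_restrict_iff' measurableSet_uIoc).2 (.of_forall hbound)
    _ = K * (b - a) ^ 2 / 2 := by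
        rw [MeasureTheory.integral_const_mul, habs, mul_div_assoc]

variable {f : ℝ → ℝ}

theorem abs_trapezoidal_error_one_le_of_lipschitzOnWith (hf : LipschitzOnWith K f [[a, b]]) :
    |trapezoidal_error f 1 a b| ≤ K * (b - a) ^ 2 / 4 := by
  obtain ⟨m, hm⟩ : ∃ m, m = (a + b) / 2 := ⟨_, rfl⟩
  have hm_mem : m ∈ [[a, b]] := by
    rw [hm, ← segment_eq_uIcc]
    simpa [midpoint_eq_smul_add, div_eq_inv_mul] using midpoint_mem_segment (𝕜 := ℝ) a b
  have hleft : LipschitzOnWith K f [[a, m]] := hf.mono (uIcc_subset_uIcc_left hm_mem)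
  have hright : LipschitzOnWith K f [[b, m]] :=
    hf.mono (uIcc_subset_uIcc right_mem_uIcc hm_mem)
  have hint_left : IntervalIntegrable f volume a m := hleft.continuousOn.intervalIntegrable
  have hint_right : IntervalIntegrable f volume b m := hright.continuousOn.intervalIntegrable
  have hsplit : trapezoidal_error f 1 a b =
      (∫ t in b..m, (f t - f b)) - ∫ t in a..m, (f t - f a) := by
    rw [trapezoidal_error, trapezoidal_integral_one,
      ← integral_add_adjacent_intervals hint_left hint_right.symm, integral_symm b m,
      integral_sub hint_left intervalIntegrable_const,
      integral_sub hint_right intervalIntegrable_const]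
    simp only [intervalIntegral.integral_const, smul_eq_mul, hm]
    ring
  calc |trapezoidal_error f 1 a b|
      ≤ |∫ t in b..m, (f t - f b)| + |∫ t in a..m, (f t - f a)| := hsplit ▸ abs_sub _ _
    _ ≤ K * (m - b) ^ 2 / 2 + K * (m - a) ^ 2 / 2 :=
        add_le_add (norm_integral_sub_left_le_of_lipschitzOnWith hright)
          (norm_integral_sub_left_le_of_lipschitzOnWith hleft)
    _ = K * (b - a) ^ 2 / 4 := by rw [hm]; ring

theorem add_natCast_mul_div_mem_uIcc {i N : ℕ} (hi : i ≤ N) :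
    a + i * ((b - a) / N) ∈ [[a, b]] := by
  rw [← segment_eq_uIcc, segment_eq_image']
  refine ⟨i / N, ⟨by positivity, div_le_one_of_le₀ (by exact_mod_cast hi) (by positivity)⟩, ?_⟩
  simp only [smul_eq_mul]
  ring

theorem abs_trapezoidal_error_le_of_lipschitzOnWith (hf : LipschitzOnWith K f [[a, b]]) {N : ℕ}
    (hN : 0 < N) : |trapezoidal_error f N a b| ≤ K * (b - a) ^ 2 / (4 * N) := by
  obtain ⟨h, hh⟩ : ∃ h, h = (b - a) / N := ⟨_, rfl⟩
  have hb : b = a + N * h := by rw [hh]; field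
  have hpiece : ∀ i ∈ Finset.range N,
      |trapezoidal_error f 1 (a + i * h) (a + (i + 1) * h)| ≤ K * h ^ 2 / 4 := by
    intro i hi
    have hi : i < N := Finset.mem_range.1 hi
    have hsub : [[a + i * h, a + (i + 1) * h]] ⊆ [[a, b]] := by
      rw [hh]
      exact uIcc_subset_uIcc (add_natCast_mul_div_mem_uIcc hi.le)
        (by exact_mod_cast add_natCast_mul_div_mem_uIcc (Nat.succ_le_of_lt hi))
    refine (abs_trapezoidal_error_one_le_of_lipschitzOnWith (hf.mono hsub)).trans_eq ?_
    ring
  calc |trapezoidal_error f N a b|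
      = |∑ i ∈ Finset.range N, trapezoidal_error f 1 (a + i * h) (a + (i + 1) * h)| := by
        rw [sum_trapezoidal_error_adjacent_intervals hN
          (hb ▸ hf.continuousOn.intervalIntegrable), ← hb]
    _ ≤ ∑ i ∈ Finset.range N, |trapezoidal_error f 1 (a + i * h) (a + (i + 1) * h)| :=
        Finset.abs_sum_le_sum_abs _ _
    _ ≤ N * (K * h ^ 2 / 4) := by
        simpa only [Finset.card_range, nsmul_eq_mul] using Finset.sum_le_card_nsmul _ _ _ hpiece
    _ = K * (b - a) ^ 2 / (4 * N) := by rw [hh]; field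

end LipschitzTrapezoid

theorem trapezoidal_integral_two (f : ℝ → ℝ) (a b : ℝ) :
    trapezoidal_integral f 2 a b = (b - a) * (1 / 2 * f ((a + b) / 2) + (f a + f b) / 4) := by
  have hmid : a + (0 + 1) * (b - a) / 2 = (a + b) / 2 := by ring
  simp only [trapezoidal_integral, Nat.add_one_sub_one, Finset.sum_range_one, Nat.cast_zero,
    Nat.cast_ofNat, hmid]
  ring

theorem midpoint_ostrowski_gruss_general {K : ℝ≥0} {a b : ℝ} {f : ℝ → ℝ} (hab : a < b)
    (hf : LipschitzOnWith K f (Icc a b)) :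
    |(1 / 2) * f ((a + b) / 2) + (f a + f b) / 4 - (1 / (b - a)) * ∫ t in a..b, f t|
      ≤ K * (b - a) / 8 := by
  have hpos : 0 < b - a := sub_pos.2 hab
  have herror : (1 / 2) * f ((a + b) / 2) + (f a + f b) / 4 - (1 / (b - a)) * ∫ t in a..b, f t
      = trapezoidal_error f 2 a b / (b - a) := by
    rw [trapezoidal_error, trapezoidal_integral_two]
    field
  rw [herror, abs_div, abs_of_pos hpos, div_le_iff₀ hpos]
  rw [← uIcc_of_le hab.le] at hf
  refine (abs_trapezoidal_error_le_of_lipschitzOnWith hf two_pos).trans_eq ?_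
  push_cast
  ring

theorem midpoint_ostrowski_gruss
    (a b M : ℝ) (hab : a < b) (hM : 0 < M)
    (f f' : ℝ → ℝ)
    (hf : ∀ t ∈ Set.Icc a b, HasDerivAt f (f' t) t)
    (hbound : ∀ t ∈ Set.Icc a b, |f' t| ≤ M) :
    |(1 / 2) * f ((a + b) / 2) + (f a + f b) / 4
        - (1 / (b - a)) * ∫ t in a..b, f t|
      ≤ M * (b - a) / 4 := by
  have hlip : LipschitzOnWith ⟨M, hM.le⟩ f (Icc a b) :=
    (convex_Icc a b).lipschitzOnWith_of_nnnorm_hasDerivWithin_le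
      (fun t ht => (hf t ht).hasDerivWithinAt) hbound
  exact (midpoint_ostrowski_gruss_general hab hlip).trans
    (div_le_div_of_nonneg_left (mul_pos hM (sub_pos.2 hab)).le four_pos (by norm_num))
end

section
/- Let I ⊂ ℝ be an open interval, a, b ∈ I with a < b, and let f : I → ℝ be differentiable with constants γ, Γ ∈ ℝ satisfying γ ≤ f'(x) ≤ Γ for all x ∈ [a,b]. Then for all x ∈ [a,b]: |(1/2)f(x) − ((x−b)f(b) − (x−a)f(a))/(2(b−a)) − (1/(b−a)) ∫_a^b f(t) dt| ≤ ((x−a)² + (b−x)²)/(8(b−a)) · (Γ − γ). -/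
open MeasureTheory intervalIntegral Set

/-!
The left-hand side is `(E(a, x) + E(x, b)) / (b - a)`, where `E(p, q)` is the error of the
one-trapezoid rule on `[p, q]`, so it suffices to show `|E(p, q)| ≤ (Γ - γ) (q - p)² / 8`.
The slope bounds put `f` below the line of slope `Γ` through `(p, f p)` and below the line of
slope `γ` through `(q, f q)`. Integrating the first bound over the left half of `[p, q]` and the
second over the right half gives both endpoint values the weight `(q - p) / 2` which they have in
the trapezoidal rule, and leaves `(Γ - γ) (q - p)² / 8`. The opposite bound is the same estimate
for `-f`, whose slopes lie between `-Γ` and `-γ`.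
-/

section SlopeBounds

variable {D : Set ℝ} {f f' : ℝ → ℝ}

theorem monotoneOn_sub_mul_of_le_hasDerivAt {γ : ℝ} (hD : Convex ℝ D) (hf : ContinuousOn f D)
    (hf' : ∀ t ∈ interior D, HasDerivAt f (f' t) t) (hγ : ∀ t ∈ interior D, γ ≤ f' t) :
    MonotoneOn (fun t ↦ f t - γ * t) D :=
  monotoneOn_of_hasDerivWithinAt_nonneg (f' := fun t ↦ f' t - γ) hD (by fun_prop)
    (fun t ht ↦ ((hf' t ht).sub (hasDerivAt_const_mul γ)).hasDerivWithinAt)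
    fun t ht ↦ sub_nonneg.2 (hγ t ht)

theorem antitoneOn_sub_mul_of_hasDerivAt_le {Γ : ℝ} (hD : Convex ℝ D) (hf : ContinuousOn f D)
    (hf' : ∀ t ∈ interior D, HasDerivAt f (f' t) t) (hΓ : ∀ t ∈ interior D, f' t ≤ Γ) :
    AntitoneOn (fun t ↦ f t - Γ * t) D :=
  antitoneOn_of_hasDerivWithinAt_nonpos (f' := fun t ↦ f' t - Γ) hD (by fun_prop)
    (fun t ht ↦ ((hf' t ht).sub (hasDerivAt_const_mul Γ)).hasDerivWithinAt)
    fun t ht ↦ sub_nonpos.2 (hΓ t ht)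

end SlopeBounds

section TrapezoidalError

variable {f : ℝ → ℝ} {p q γ Γ : ℝ}

theorem intervalIntegrable_of_monotoneOn_sub_mul
    (hγ : MonotoneOn (fun t ↦ f t - γ * t) (uIcc p q)) : IntervalIntegrable f volume p q := by
  have hlin : IntervalIntegrable (fun t ↦ γ * t) volume p q :=
    (continuous_const_mul γ).intervalIntegrable p q
  simpa using hγ.intervalIntegrable.add hlin

theorem integral_add_mul_sub (y c r u v : ℝ) :
    ∫ t in u..v, (y + c * (t - r)) = (v - u) * y + c * (((v - r) ^ 2 - (u - r) ^ 2) / 2) := by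
  rw [integral_add (by simp) (Continuous.intervalIntegrable (by fun_prop) _ _),
    intervalIntegral.integral_const, intervalIntegral.integral_const_mul,
    integral_comp_sub_right (fun t ↦ t), integral_id, smul_eq_mul]

theorem integral_le_of_le_add_mul_sub {u v y c r : ℝ} (huv : u ≤ v)
    (hf : IntervalIntegrable f volume u v) (hle : ∀ t ∈ Icc u v, f t ≤ y + c * (t - r)) :
    ∫ t in u..v, f t ≤ (v - u) * y + c * (((v - r) ^ 2 - (u - r) ^ 2) / 2) :=
  (integral_mono_on huv hf (Continuous.intervalIntegrable (by fun_prop) _ _) hle).trans_eq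
    (integral_add_mul_sub y c r u v)

theorem integral_sub_trapezoidal_integral_le_of_le_add_mul_sub (hpq : p ≤ q)
    (hf : IntervalIntegrable f volume p q) (hp : ∀ t ∈ Icc p q, f t ≤ f p + Γ * (t - p))
    (hq : ∀ t ∈ Icc p q, f t ≤ f q + γ * (t - q)) :
    (∫ t in p..q, f t) - trapezoidal_integral f 1 p q ≤ (q - p) ^ 2 / 8 * (Γ - γ) := by
  obtain ⟨m, hm⟩ : ∃ m, m = (p + q) / 2 := ⟨_, rfl⟩
  have hpm : p ≤ m := by linarith
  have hmq : m ≤ q := by linarith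
  have hm_mem : m ∈ uIcc p q := mem_uIcc_of_le hpm hmq
  have hf_left : IntervalIntegrable f volume p m :=
    hf.mono_set (uIcc_subset_uIcc_left hm_mem)
  have hf_right : IntervalIntegrable f volume m q :=
    hf.mono_set (uIcc_subset_uIcc_right hm_mem)
  have h_left := integral_le_of_le_add_mul_sub hpm hf_left
    fun t ht ↦ hp t (Icc_subset_Icc_right hmq ht)
  have h_right := integral_le_of_le_add_mul_sub hmq hf_right
    fun t ht ↦ hq t (Icc_subset_Icc_left hpm ht)
  rw [← integral_add_adjacent_intervals hf_left hf_right, trapezoidal_integral_one]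
  subst hm
  linarith

theorem integral_sub_trapezoidal_integral_le (hpq : p ≤ q)
    (hγ : MonotoneOn (fun t ↦ f t - γ * t) (Icc p q))
    (hΓ : AntitoneOn (fun t ↦ f t - Γ * t) (Icc p q)) :
    (∫ t in p..q, f t) - trapezoidal_integral f 1 p q ≤ (q - p) ^ 2 / 8 * (Γ - γ) := by
  refine integral_sub_trapezoidal_integral_le_of_le_add_mul_sub hpq
    (intervalIntegrable_of_monotoneOn_sub_mul (uIcc_of_le hpq ▸ hγ)) (fun t ht ↦ ?_) fun t ht ↦ ?_
  · linarith [hΓ (left_mem_Icc.2 hpq) ht ht.1]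
  · linarith [hγ ht (right_mem_Icc.2 hpq) ht.2]

theorem abs_trapezoidal_error_one_le (hpq : p ≤ q)
    (hγ : MonotoneOn (fun t ↦ f t - γ * t) (Icc p q))
    (hΓ : AntitoneOn (fun t ↦ f t - Γ * t) (Icc p q)) :
    |trapezoidal_error f 1 p q| ≤ (q - p) ^ 2 / 8 * (Γ - γ) := by
  have h_upper := integral_sub_trapezoidal_integral_le hpq hγ hΓ
  have hΓ_neg : MonotoneOn (fun t ↦ -f t - -Γ * t) (Icc p q) :=
    hΓ.neg.congr fun t _ ↦ by ring
  have hγ_neg : AntitoneOn (fun t ↦ -f t - -γ * t) (Icc p q) :=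
    hγ.neg.congr fun t _ ↦ by ring
  have h_lower := integral_sub_trapezoidal_integral_le hpq hΓ_neg hγ_neg
  rw [intervalIntegral.integral_neg] at h_lower
  simp only [trapezoidal_error, trapezoidal_integral_one] at h_upper h_lower ⊢
  exact abs_le.2 ⟨by linarith, by linarith⟩

end TrapezoidalError

theorem half_sub_sub_average_eq_trapezoidal_error_add_div {f : ℝ → ℝ} {a b x : ℝ} (hab : a ≠ b)
    (hax : IntervalIntegrable f volume a x) (hxb : IntervalIntegrable f volume x b) :
    (1 / 2) * f x - ((x - b) * f b - (x - a) * f a) / (2 * (b - a))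
        - (1 / (b - a)) * ∫ t in a..b, f t
      = (trapezoidal_error f 1 a x + trapezoidal_error f 1 x b) / (b - a) := by
  have hba : b - a ≠ 0 := sub_ne_zero.2 hab.symm
  rw [← integral_add_adjacent_intervals hax hxb]
  simp only [trapezoidal_error, trapezoidal_integral_one]
  field

theorem cheng_ostrowski_gruss_general {f : ℝ → ℝ} {a b x γ Γ : ℝ} (hab : a < b)
    (hγ : MonotoneOn (fun t ↦ f t - γ * t) (Icc a b))
    (hΓ : AntitoneOn (fun t ↦ f t - Γ * t) (Icc a b)) (hx : x ∈ Icc a b) :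
    |(1 / 2) * f x - ((x - b) * f b - (x - a) * f a) / (2 * (b - a))
        - (1 / (b - a)) * ∫ t in a..b, f t|
      ≤ ((x - a) ^ 2 + (b - x) ^ 2) / (8 * (b - a)) * (Γ - γ) := by
  have hba : 0 < b - a := sub_pos.2 hab
  have hf : IntervalIntegrable f volume a b :=
    intervalIntegrable_of_monotoneOn_sub_mul (uIcc_of_le hab.le ▸ hγ)
  have hx_mem : x ∈ uIcc a b := Icc_subset_uIcc hx
  have h_left : |trapezoidal_error f 1 a x| ≤ (x - a) ^ 2 / 8 * (Γ - γ) :=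
    have hsub : Icc a x ⊆ Icc a b := Icc_subset_Icc_right hx.2
    abs_trapezoidal_error_one_le hx.1 (hγ.mono hsub) (hΓ.mono hsub)
  have h_right : |trapezoidal_error f 1 x b| ≤ (b - x) ^ 2 / 8 * (Γ - γ) :=
    have hsub : Icc x b ⊆ Icc a b := Icc_subset_Icc_left hx.1
    abs_trapezoidal_error_one_le hx.2 (hγ.mono hsub) (hΓ.mono hsub)
  rw [half_sub_sub_average_eq_trapezoidal_error_add_div hab.ne
    (hf.mono_set (uIcc_subset_uIcc_left hx_mem)) (hf.mono_set (uIcc_subset_uIcc_right hx_mem)),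
    abs_div, abs_of_pos hba]
  calc |trapezoidal_error f 1 a x + trapezoidal_error f 1 x b| / (b - a)
      ≤ ((x - a) ^ 2 / 8 * (Γ - γ) + (b - x) ^ 2 / 8 * (Γ - γ)) / (b - a) := by
        gcongr
        exact (abs_add_le _ _).trans (add_le_add h_left h_right)
    _ = ((x - a) ^ 2 + (b - x) ^ 2) / (8 * (b - a)) * (Γ - γ) := by field

theorem cheng_ostrowski_gruss
    (I : Set ℝ) (hI : IsOpen I) (hI' : I.OrdConnected)
    (a b : ℝ) (ha : a ∈ I) (hb : b ∈ I) (hab : a < b)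
    (f f' : ℝ → ℝ)
    (hf : ∀ t ∈ I, HasDerivAt f (f' t) t)
    (γ Γ : ℝ)
    (hγ : ∀ t ∈ Set.Icc a b, γ ≤ f' t)
    (hΓ : ∀ t ∈ Set.Icc a b, f' t ≤ Γ)
    (x : ℝ) (hx : x ∈ Set.Icc a b) :
    |(1 / 2) * f x - ((x - b) * f b - (x - a) * f a) / (2 * (b - a))
        - (1 / (b - a)) * ∫ t in a..b, f t|
      ≤ ((x - a) ^ 2 + (b - x) ^ 2) / (8 * (b - a)) * (Γ - γ) := by
  have hderiv (t : ℝ) (ht : t ∈ Icc a b) : HasDerivAt f (f' t) t := hf t (hI'.out ha hb ht)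
  have hcont : ContinuousOn f (Icc a b) := HasDerivAt.continuousOn hderiv
  have hint : interior (Icc a b) ⊆ Icc a b := interior_subset
  exact cheng_ostrowski_gruss_general hab
    (monotoneOn_sub_mul_of_le_hasDerivAt (convex_Icc a b) hcont
      (fun t ht ↦ hderiv t (hint ht)) fun t ht ↦ hγ t (hint ht))
    (antitoneOn_sub_mul_of_hasDerivAt_le (convex_Icc a b) hcont
      (fun t ht ↦ hderiv t (hint ht)) fun t ht ↦ hΓ t (hint ht)) hx
end

section
/- Let I ⊂ ℝ be an open interval, a, b ∈ I with a < b, and let f : I → ℝ be differentiable with constants γ, Γ ∈ ℝ satisfying γ ≤ f'(x) ≤ Γ for all x ∈ [a,b]. Then for all x ∈ [a,b]: |f(x) − ((f(b) − f(a))/(b−a))·(x − (a+b)/2) − (1/(b−a)) ∫_a^b f(t) dt| ≤ (1/4)(b−a)(Γ − γ). -/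
/-!
Put `m = (a + b) / 2`. Integrating `(t - k) • f' t` by parts over `[a, x]` with `k = a + x - m` and
over `[x, b]` with `k = b + x - m` writes `b - a` times the quantity to be estimated as
`∫ K t • f' t`. The values of `K` on the two pieces fill `[m - x, (b - a) / 2]` and
`[-(b - a) / 2, m - x]`, so `∫ |K|` does not depend on `x`: it is `((b - a) / 2) ^ 2`.
As the quantity vanishes for affine functions, `f' t` may be replaced by `f' t - c`, and taking for
`c` the midpoint of `[γ, Γ]` gives `|f' t - c| ≤ (Γ - γ) / 2`. This yields the constant `1 / 8`.
-/

open MeasureTheory intervalIntegral Set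

theorem hasDerivWithinAt_integral_of_continuousOn_Icc {E : Type*} [NormedAddCommGroup E]
    [NormedSpace ℝ E] [CompleteSpace E] {g : ℝ → E} {p q t : ℝ} (hg : ContinuousOn g (Icc p q))
    (ht : t ∈ Icc p q) : HasDerivWithinAt (fun u ↦ ∫ s in p..u, g s) (g t) (Icc p q) t := by
  have : Fact (t ∈ Icc p q) := ⟨ht⟩
  have hint : IntervalIntegrable g volume p t :=
    (hg.mono (Icc_subset_Icc_right ht.2)).intervalIntegrable_of_Icc ht.1
  exact integral_hasDerivWithinAt_right hint
    (hg.stronglyMeasurableAtFilter_nhdsWithin measurableSet_Icc t) (hg t ht)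

theorem integral_abs_neg_self {h : ℝ} (hh : 0 ≤ h) : ∫ u in -h..h, |u| = h ^ 2 := by
  have hint (p q : ℝ) : IntervalIntegrable (fun u : ℝ ↦ |u|) volume p q :=
    continuous_abs.intervalIntegrable p q
  have hright : ∫ u in (0 : ℝ)..h, |u| = h ^ 2 / 2 := by
    rw [integral_congr (g := fun u ↦ u) fun u hu ↦ abs_of_nonneg (uIcc_of_le hh ▸ hu).1,
      integral_id]
    ring
  have hleft : ∫ u in -h..0, |u| = ∫ u in (0 : ℝ)..h, |u| := by
    simpa only [abs_neg, neg_zero] using (integral_comp_neg (a := 0) (b := h) fun u : ℝ ↦ |u|).symm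
  rw [← integral_add_adjacent_intervals (hint (-h) 0) (hint 0 h), hleft, hright, add_halves]

theorem integral_abs_sub_add_integral_abs_sub {a b : ℝ} (hab : a ≤ b) (x : ℝ) :
    (∫ t in a..x, |t - (a + x - (a + b) / 2)|) + ∫ t in x..b, |t - (b + x - (a + b) / 2)|
      = ((b - a) / 2) ^ 2 := by
  have hint (p q : ℝ) : IntervalIntegrable (fun u : ℝ ↦ |u|) volume p q :=
    continuous_abs.intervalIntegrable p q
  rw [integral_comp_sub_right (fun u ↦ |u|), integral_comp_sub_right (fun u ↦ |u|), add_comm,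
    ← integral_abs_neg_self (by linarith : 0 ≤ (b - a) / 2)]
  convert integral_add_adjacent_intervals (hint (-((b - a) / 2)) ((a + b) / 2 - x))
    (hint ((a + b) / 2 - x) ((b - a) / 2)) using 3 <;> ring

section

variable {E : Type*} [NormedAddCommGroup E] [NormedSpace ℝ E] [CompleteSpace E]
  {f f' : ℝ → E} {a b x M : ℝ}

-- `f'` need not be integrable, so the mean value inequality stands in for integration by parts.
theorem norm_smul_sub_smul_sub_integral_le (hab : a ≤ b) (hf : ContinuousOn f (Icc a b))
    (hf' : ∀ t ∈ Ico a b, HasDerivWithinAt f (f' t) (Ici t) t)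
    (hM : ∀ t ∈ Ico a b, ‖f' t‖ ≤ M) (k : ℝ) :
    ‖(b - k) • f b - (a - k) • f a - ∫ t in a..b, f t‖ ≤ M * ∫ t in a..b, |t - k| := by
  have hcont : Continuous fun t ↦ |t - k| := by fun_prop
  have hF (t) (ht : t ∈ Icc a b) :
      HasDerivWithinAt (fun u ↦ ∫ s in a..u, f s) (f t) (Icc a b) t :=
    hasDerivWithinAt_integral_of_continuousOn_Icc hf ht
  have hB (t) : HasDerivAt (fun u ↦ M * ∫ s in a..u, |s - k|) (M * |t - k|) t :=
    (hcont.integral_hasStrictDerivAt a t).hasDerivAt.const_mul M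
  have hG : ContinuousOn (fun t ↦ (t - k) • f t - (a - k) • f a - ∫ s in a..t, f s) (Icc a b) :=
    (((continuous_sub_right k).continuousOn.smul hf).sub continuousOn_const).sub
      fun t ht ↦ (hF t ht).continuousWithinAt
  have hG' (t) (ht : t ∈ Ico a b) :
      HasDerivWithinAt (fun t ↦ (t - k) • f t - (a - k) • f a - ∫ s in a..t, f s)
        ((t - k) • f' t) (Ici t) t := by
    have hFt := (hF t (Ico_subset_Icc_self ht)).mono_of_mem_nhdsWithin (Icc_mem_nhdsGE_of_mem ht)
    refine ((((hasDerivWithinAt_id t _).sub_const k).smul (hf' t ht)).sub_const _ |>.sub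
      hFt).congr_deriv ?_
    simp only [id_eq, one_smul, add_sub_cancel_right]
  refine image_norm_le_of_norm_deriv_right_le_deriv_boundary' hG hG' ?_
    (fun t _ ↦ (hB t).continuousAt.continuousWithinAt) (fun t _ ↦ (hB t).hasDerivWithinAt)
    (fun t ht ↦ ?_) (right_mem_Icc.2 hab)
  · simp only [integral_same, sub_self, norm_zero, mul_zero, le_refl]
  · rw [norm_smul, Real.norm_eq_abs, mul_comm]
    exact mul_le_mul_of_nonneg_right (hM t ht) (abs_nonneg _)

theorem norm_smul_sub_midpoint_smul_sub_integral_le (hf : ContinuousOn f (Icc a b))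
    (hf' : ∀ t ∈ Ico a b, HasDerivWithinAt f (f' t) (Ici t) t)
    (hM : ∀ t ∈ Ico a b, ‖f' t‖ ≤ M) (hx : x ∈ Icc a b) :
    ‖(b - a) • f x - (x - (a + b) / 2) • (f b - f a) - ∫ t in a..b, f t‖
      ≤ M * ((b - a) / 2) ^ 2 := by
  obtain ⟨hax, hxb⟩ := hx
  have hfl : ContinuousOn f (Icc a x) := hf.mono (Icc_subset_Icc_right hxb)
  have hfr : ContinuousOn f (Icc x b) := hf.mono (Icc_subset_Icc_left hax)
  have hl := norm_smul_sub_smul_sub_integral_le hax hfl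
    (fun t ht ↦ hf' t (Ico_subset_Ico_right hxb ht))
    (fun t ht ↦ hM t (Ico_subset_Ico_right hxb ht)) (a + x - (a + b) / 2)
  have hr := norm_smul_sub_smul_sub_integral_le hxb hfr
    (fun t ht ↦ hf' t (Ico_subset_Ico_left hax ht))
    (fun t ht ↦ hM t (Ico_subset_Ico_left hax ht)) (b + x - (a + b) / 2)
  rw [← integral_abs_sub_add_integral_abs_sub (hax.trans hxb) x, mul_add,
    ← integral_add_adjacent_intervals (hfl.intervalIntegrable_of_Icc hax)
      (hfr.intervalIntegrable_of_Icc hxb)]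
  refine (norm_add_le_of_le hl hr).trans_eq' (congrArg norm ?_)
  module

theorem dragomir_wang_matic_ostrowski_gruss_general (hab : a < b) (hf : ContinuousOn f (Icc a b))
    (hf' : ∀ t ∈ Ico a b, HasDerivWithinAt f (f' t) (Ici t) t) {c : E}
    (hM : ∀ t ∈ Ico a b, ‖f' t - c‖ ≤ M) (hx : x ∈ Icc a b) :
    ‖f x - (x - (a + b) / 2) • slope f a b - ⨍ t in a..b, f t‖ ≤ (b - a) / 4 * M := by
  have hpos : 0 < b - a := sub_pos.2 hab
  set g : ℝ → E := fun t ↦ f t - (t - (a + b) / 2) • c with hg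
  have hline : Continuous fun t : ℝ ↦ (t - (a + b) / 2) • c := by fun_prop
  have hg' (t) (ht : t ∈ Ico a b) : HasDerivWithinAt g (f' t - c) (Ici t) t := by
    simpa only [one_smul] using
      (hf' t ht).fun_sub (((hasDerivAt_id' t).sub_const _).smul_const c).hasDerivWithinAt
  have hline_integral : ∫ t in a..b, (t - (a + b) / 2) • c = 0 := by
    rw [intervalIntegral.integral_smul_const, integral_comp_sub_right (fun u ↦ u), integral_id]
    convert zero_smul ℝ c using 2
    ring
  have hg_integral : ∫ t in a..b, g t = ∫ t in a..b, f t := by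
    rw [intervalIntegral.integral_sub (hf.intervalIntegrable_of_Icc hab.le)
      (hline.intervalIntegrable a b), hline_integral, sub_zero]
  have hscale : f x - (x - (a + b) / 2) • slope f a b - ⨍ t in a..b, f t
      = (b - a)⁻¹ •
        ((b - a) • g x - (x - (a + b) / 2) • (g b - g a) - ∫ t in a..b, g t) := by
    rw [hg_integral, interval_average_eq, slope_def_module, hg]
    match_scalars <;> field_simp
    ring
  rw [hscale, norm_smul, norm_inv, Real.norm_of_nonneg hpos.le, inv_mul_le_iff₀ hpos]
  refine (norm_smul_sub_midpoint_smul_sub_integral_le (hf.sub hline.continuousOn) hg' hM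
    hx).trans_eq ?_
  ring

end

theorem abs_sub_slope_mul_sub_integral_le_of_mem_Icc {f f' : ℝ → ℝ} {a b γ Γ x : ℝ} (hab : a < b)
    (hf : ContinuousOn f (Icc a b))
    (hf' : ∀ t ∈ Ico a b, HasDerivWithinAt f (f' t) (Ici t) t)
    (hbound : ∀ t ∈ Ico a b, f' t ∈ Icc γ Γ) (hx : x ∈ Icc a b) :
    |f x - (f b - f a) / (b - a) * (x - (a + b) / 2) - (1 / (b - a)) * ∫ t in a..b, f t|
      ≤ 1 / 8 * (b - a) * (Γ - γ) := by
  have hM (t) (ht : t ∈ Ico a b) : ‖f' t - (γ + Γ) / 2‖ ≤ (Γ - γ) / 2 := by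
    obtain ⟨hγ, hΓ⟩ := hbound t ht
    exact abs_le.2 ⟨by linarith, by linarith⟩
  have hgeneral := dragomir_wang_matic_ostrowski_gruss_general hab hf hf' hM hx
  rw [slope_def_field, interval_average_eq, smul_eq_mul, smul_eq_mul, ← one_div, Real.norm_eq_abs,
    mul_comm (x - _)] at hgeneral
  exact hgeneral.trans_eq (by ring)

theorem dragomir_wang_matic_ostrowski_gruss
    (I : Set ℝ) (hI : IsOpen I) (hI' : I.OrdConnected)
    (a b : ℝ) (ha : a ∈ I) (hb : b ∈ I) (hab : a < b)
    (f f' : ℝ → ℝ)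
    (hf : ∀ t ∈ I, HasDerivAt f (f' t) t)
    (γ Γ : ℝ)
    (hγ : ∀ t ∈ Set.Icc a b, γ ≤ f' t)
    (hΓ : ∀ t ∈ Set.Icc a b, f' t ≤ Γ)
    (x : ℝ) (hx : x ∈ Set.Icc a b) :
    |f x - (f b - f a) / (b - a) * (x - (a + b) / 2)
        - (1 / (b - a)) * ∫ t in a..b, f t|
      ≤ (1 / 4) * (b - a) * (Γ - γ) := by
  have hderiv (t) (ht : t ∈ Icc a b) : HasDerivAt f (f' t) t := hf t (hI'.out ha hb ht)
  have hΓγ_nonneg : 0 ≤ Γ - γ := sub_nonneg.2 ((hγ x hx).trans (hΓ x hx))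
  have hsharp := abs_sub_slope_mul_sub_integral_le_of_mem_Icc hab
    (fun t ht ↦ (hderiv t ht).continuousAt.continuousWithinAt)
    (fun t ht ↦ (hderiv t (Ico_subset_Icc_self ht)).hasDerivWithinAt)
    (fun t ht ↦ ⟨hγ t (Ico_subset_Icc_self ht), hΓ t (Ico_subset_Icc_self ht)⟩) hx
  refine hsharp.trans ?_
  gcongr
  norm_num
end

section
/- Let f : [a,b] → ℝ be a differentiable function with bounded derivative, i.e. ‖f'‖_∞ = sup_{t∈[a,b]} |f'(t)| < ∞. Then for every x ∈ [a,b]: |f(x) − (1/(b−a)) ∫_a^b f(t) dt| ≤ [1/4 + (x − (a+b)/2)²/(b−a)²]·(b−a)·‖f'‖_∞. -/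
open MeasureTheory intervalIntegral Set

/-!
The mean value inequality makes `f` Lipschitz on `[a, b]` with constant `‖f'‖_∞`, and
`f x` minus the mean of `f` is the mean of `f x - f t`. Hence the deviation is at most `‖f'‖_∞`
times the mean distance from `x` to a point of `[a, b]`, and this mean distance is exactly
`(1 / 4 + (x - (a + b) / 2) ^ 2 / (b - a) ^ 2) * (b - a)`.
-/

theorem integral_abs_sub_of_mem_Icc {a b x : ℝ} (hx : x ∈ Icc a b) :
    ∫ t in a..b, |x - t| = ((x - a) ^ 2 + (b - x) ^ 2) / 2 := by
  have hint (c d : ℝ) : IntervalIntegrable (fun t => |x - t|) volume c d :=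
    Continuous.intervalIntegrable (by fun_prop) c d
  have hleft : ∫ t in a..x, |x - t| = (x - a) ^ 2 / 2 := calc
    ∫ t in a..x, |x - t| = ∫ t in a..x, (x - t) := integral_congr fun t ht =>
      abs_of_nonneg (sub_nonneg.2 (uIcc_of_le hx.1 ▸ ht).2)
    _ = (x - a) ^ 2 / 2 := by simp [integral_comp_sub_left fun t => t]
  have hright : ∫ t in x..b, |x - t| = (b - x) ^ 2 / 2 := calc
    ∫ t in x..b, |x - t| = ∫ t in x..b, (t - x) := integral_congr fun t ht =>
      (abs_sub_comm x t).trans (abs_of_nonneg (sub_nonneg.2 (uIcc_of_le hx.2 ▸ ht).1))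
    _ = (b - x) ^ 2 / 2 := by simp [integral_comp_sub_right fun t => t]
  rw [← integral_add_adjacent_intervals (hint a x) (hint x b), hleft, hright, add_div]

theorem interval_average_abs_sub_of_mem_Icc {a b x : ℝ} (hab : a < b) (hx : x ∈ Icc a b) :
    ⨍ t in a..b, |x - t| = (1 / 4 + (x - (a + b) / 2) ^ 2 / (b - a) ^ 2) * (b - a) := by
  have hba : b - a ≠ 0 := (sub_pos.2 hab).ne'
  rw [interval_average_eq_div, integral_abs_sub_of_mem_Icc hx]
  field_simp
  ring

theorem setAverage_mono_on {α : Type*} [MeasurableSpace α] {μ : Measure α} {s : Set α}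
    {f g : α → ℝ} (hf : IntegrableOn f s μ) (hg : IntegrableOn g s μ) (hs : MeasurableSet s)
    (hfg : ∀ t ∈ s, f t ≤ g t) : ⨍ t in s, f t ∂μ ≤ ⨍ t in s, g t ∂μ := by
  rw [setAverage_eq, setAverage_eq]
  exact smul_le_smul_of_nonneg_left (setIntegral_mono_on hf hg hs hfg) (by positivity)

section NormedSpace

variable {E : Type*} [NormedAddCommGroup E] [NormedSpace ℝ E] [CompleteSpace E]

theorem norm_sub_average_le {α : Type*} [MeasurableSpace α] {μ : Measure α}
    [IsFiniteMeasure μ] [NeZero μ] {f : α → E} (hf : Integrable f μ) (c : E) :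
    ‖c - ⨍ t, f t ∂μ‖ ≤ ⨍ t, ‖c - f t‖ ∂μ := by
  have hsub : c - ⨍ t, f t ∂μ = ⨍ t, (c - f t) ∂μ := by
    rw [average, average, integral_sub (integrable_const c) hf.to_average]
    simp
  rw [hsub]
  exact norm_integral_le_integral_norm _

theorem ostrowski_inequality_general {a b : ℝ} (hab : a < b) {f : ℝ → E}
    (hf : IntervalIntegrable f volume a b) {x : ℝ} (hx : x ∈ Icc a b) {C : ℝ}
    (hC : ∀ t ∈ Icc a b, ‖f x - f t‖ ≤ C * |x - t|) :
    ‖f x - ⨍ t in a..b, f t‖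
      ≤ (1 / 4 + (x - (a + b) / 2) ^ 2 / (b - a) ^ 2) * (b - a) * C := by
  have hfinite : IsFiniteMeasure (volume.restrict (uIoc a b)) := ⟨by simp⟩
  have hnonzero : NeZero (volume.restrict (uIoc a b)) := ⟨by simp [uIoc_of_le hab.le, hab]⟩
  have hsubset : uIoc a b ⊆ Icc a b := uIoc_of_le hab.le ▸ Ioc_subset_Icc_self
  calc ‖f x - ⨍ t in a..b, f t‖
      ≤ ⨍ t in a..b, ‖f x - f t‖ := norm_sub_average_le hf.def' (f x)
    _ ≤ ⨍ t in a..b, C * |x - t| :=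
        setAverage_mono_on (intervalIntegrable_const.sub hf).norm.def'
          (Continuous.intervalIntegrable (by fun_prop) a b).def' measurableSet_uIoc
          fun t ht => hC t (hsubset ht)
    _ = C * ⨍ t in a..b, |x - t| := integral_const_mul C _
    _ = _ := by rw [interval_average_abs_sub_of_mem_Icc hab hx, mul_comm]

end NormedSpace

theorem ostrowski_inequality
    (a b : ℝ) (hab : a < b)
    (f f' : ℝ → ℝ)
    (hf : ∀ t ∈ Set.Icc a b, HasDerivAt f (f' t) t)
    (hbdd : BddAbove ((fun t => |f' t|) '' Set.Icc a b))
    (x : ℝ) (hx : x ∈ Set.Icc a b) :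
    |f x - (1 / (b - a)) * ∫ t in a..b, f t|
      ≤ (1 / 4 + (x - (a + b) / 2) ^ 2 / (b - a) ^ 2) * (b - a) *
          sSup ((fun t => |f' t|) '' Set.Icc a b) := by
  rw [one_div, ← smul_eq_mul, ← interval_average_eq]
  exact ostrowski_inequality_general hab
    ((HasDerivAt.continuousOn hf).intervalIntegrable_of_Icc hab.le) hx fun t ht =>
      (convex_Icc a b).norm_image_sub_le_of_norm_hasDerivWithin_le
        (fun s hs => (hf s hs).hasDerivWithinAt)
        (fun s hs => le_csSup hbdd (mem_image_of_mem _ hs)) ht hx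
end

section
/- Let f be a differentiable function on [a,b] with |f'(t)| ≤ M for all t ∈ [a,b], and let α ≥ 1. Then for every x ∈ [a,b): ∫_a^x (b−t)^{α−1} |t − (a+x)/2| dt + ∫_x^b (b−t)^{α−1} |t − (b+x)/2| dt, multiplied by M(b−x)^{1−α}/(b−a), is at most (M(b−x)^{1−α}/(2(b−a)))·[(((b−a)^α − (b−x)^α)/α)·(x−a) + (b−x)^{α+1}/α]. -/
open MeasureTheory intervalIntegral Set

theorem integral_mul_abs_sub_midpoint_le {μ : Measure ℝ} {w : ℝ → ℝ} {c d : ℝ} (hcd : c ≤ d)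
    (hw : IntervalIntegrable w μ c d) (hw_nonneg : ∀ t ∈ Icc c d, 0 ≤ w t) :
    ∫ t in c..d, w t * |t - (c + d) / 2| ∂μ ≤ (∫ t in c..d, w t ∂μ) * ((d - c) / 2) := by
  rw [← intervalIntegral.integral_mul_const]
  refine integral_mono_on hcd (hw.mul_continuousOn (by fun_prop)) (hw.mul_const _) fun t ht ↦ ?_
  have abs_sub_midpoint_le : |t - (c + d) / 2| ≤ (d - c) / 2 := by
    rwa [Real.Icc_eq_closedBall, Metric.mem_closedBall, Real.dist_eq] at ht
  exact mul_le_mul_of_nonneg_left abs_sub_midpoint_le (hw_nonneg t ht)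

theorem intervalIntegrable_sub_left_rpow {r : ℝ} (hr : -1 < r) (b c d : ℝ) :
    IntervalIntegrable (fun t ↦ (b - t) ^ r) volume c d := by
  simpa only [sub_sub_cancel] using
    (intervalIntegrable_rpow' hr (a := b - c) (b := b - d)).comp_sub_left b

theorem integral_sub_left_rpow {r : ℝ} (hr : -1 < r) (b c d : ℝ) :
    ∫ t in c..d, (b - t) ^ r = ((b - c) ^ (r + 1) - (b - d) ^ (r + 1)) / (r + 1) := by
  rw [integral_comp_sub_left (fun u ↦ u ^ r), integral_rpow (Or.inl hr)]

theorem integral_sub_left_rpow_mul_abs_sub_midpoint_le {α b c d : ℝ} (hα : 0 < α)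
    (hcd : c ≤ d) (hdb : d ≤ b) :
    ∫ t in c..d, (b - t) ^ (α - 1) * |t - (c + d) / 2|
      ≤ ((b - c) ^ α - (b - d) ^ α) / α * ((d - c) / 2) := by
  have hr : -1 < α - 1 := by linarith
  have weight_nonneg : ∀ t ∈ Icc c d, 0 ≤ (b - t) ^ (α - 1) := fun t ht ↦
    Real.rpow_nonneg (sub_nonneg.2 (ht.2.trans hdb)) _
  simpa only [integral_sub_left_rpow hr, sub_add_cancel] using
    integral_mul_abs_sub_midpoint_le hcd (intervalIntegrable_sub_left_rpow hr b c d) weight_nonneg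

theorem kernel_integral_estimate_general {a b α M x : ℝ} (hα : 0 < α) (hM : 0 ≤ M)
    (hx : x ∈ Ico a b) :
    M * (b - x) ^ (1 - α) / (b - a) *
        ((∫ t in a..x, (b - t) ^ (α - 1) * |t - (a + x) / 2|)
          + ∫ t in x..b, (b - t) ^ (α - 1) * |t - (b + x) / 2|)
      ≤ M * (b - x) ^ (1 - α) / (2 * (b - a)) *
          ((((b - a) ^ α - (b - x) ^ α) / α) * (x - a) + (b - x) ^ (α + 1) / α) := by
  obtain ⟨hax, hxb⟩ := hx
  have hbx : 0 < b - x := sub_pos.2 hxb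
  have hba : 0 < b - a := sub_pos.2 (hax.trans_lt hxb)
  have left_le := integral_sub_left_rpow_mul_abs_sub_midpoint_le hα hax hxb.le
  have right_le : ∫ t in x..b, (b - t) ^ (α - 1) * |t - (b + x) / 2|
      ≤ (b - x) ^ α / α * ((b - x) / 2) := by
    simpa only [sub_self, Real.zero_rpow hα.ne', sub_zero, add_comm x b] using
      integral_sub_left_rpow_mul_abs_sub_midpoint_le hα hxb.le (le_refl b)
  calc
    _ ≤ M * (b - x) ^ (1 - α) / (b - a) *
          (((b - a) ^ α - (b - x) ^ α) / α * ((x - a) / 2)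
            + (b - x) ^ α / α * ((b - x) / 2)) := by gcongr
    _ = _ := by
      rw [Real.rpow_add_one hbx.ne']
      field_simp

theorem kernel_integral_estimate
    (a b α M : ℝ) (hab : a < b) (hα : 1 ≤ α) (hM : 0 < M)
    (f f' : ℝ → ℝ)
    (hf : ∀ t ∈ Set.Icc a b, HasDerivAt f (f' t) t)
    (hbound : ∀ t ∈ Set.Icc a b, |f' t| ≤ M)
    (x : ℝ) (hx : x ∈ Set.Ico a b) :
    M * (b - x) ^ (1 - α) / (b - a) *
        ((∫ t in a..x, (b - t) ^ (α - 1) * |t - (a + x) / 2|)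
          + ∫ t in x..b, (b - t) ^ (α - 1) * |t - (b + x) / 2|)
      ≤ M * (b - x) ^ (1 - α) / (2 * (b - a)) *
          ((((b - a) ^ α - (b - x) ^ α) / α) * (x - a) + (b - x) ^ (α + 1) / α) :=
  kernel_integral_estimate_general (zero_lt_one.trans_le hα) hM.le hx
end
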